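/- arXiv:2402.00848 — 2 statements merged into one kernel-verified Lean document; each statement's English description precedes it below -/
import Mathlib

section
/- There exists an absolute constant c > 0 with the following property. Let Ω be a nonempty set, let Φ = {φ_1,…,φ_N} be a linearly independent system of bounded real-valued functions on Ω satisfying ∑_{i=1}^N φ_i(ω)² ≤ N t² for all ω ∈ Ω, let X_N := span{φ_1,…,φ_N}, and let B_Φ(L_∞) := {(a_1,…,a_N) ∈ ℝ^N : ‖∑_{i=1}^N a_i φ_i‖_∞ ≤ 1}, where ‖f‖_∞ := sup_{ω∈Ω}|f(ω)|. Assume that vol(B_Φ(L_∞))^{1/N} ≤ K N^{−1/2}, where vol denotes N-dimensional Lebesgue measure, and that points ξ^1,…,ξ^m ∈ Ω satisfy ‖f‖_∞ ≤ D max_{1≤j≤m}|f(ξ^j)| for all f ∈ X_N. Then m ≥ (N/e)·exp(c (tKD)^{−2}). -/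
open MeasureTheory

/-- The uniform norm `sup_ω |f ω|` of a bounded function on `Ω`. -/
noncomputable def supNorm {Ω : Type*} (f : Ω → ℝ) : ℝ :=
  ⨆ ω, |f ω|

/-!
Let `M` be the `N × m` matrix of values `φ_i(ξ^j)`. The discretization inequality puts the polytope
`{a | |(a ᵥ* M) j| ≤ D⁻¹ for all j}` inside `B_Φ(L_∞)`, so the theorem follows from a lower bound
for the volume of an intersection of `m` slabs.

For that, draw `θ ∈ ℝ^m` with independent logistic coordinates. For every `x` the point `θ` falls
into the box of half-width `h` around `x ᵥ* M` with probability at least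
`exp (-(2 / sinh h) * ∑ j, cosh ((x ᵥ* M) j))`. For every `θ`, on the other hand, the points `x`
whose box contains `θ` lie in a translate of the polytope `{x | |(x ᵥ* M) j| ≤ 2 * h for all j}`.
By Fubini, the volume of that polytope is therefore at least the average of these probabilities
over the unit cube. Jensen's inequality moves the average into the exponent, where each linear form
is sub-Gaussian, so that its `cosh` has a bounded mean. Once `M` is rescaled to have columns of
squared norm at most `8 * Λ`, where `Λ = 1 + log (m / N)`, the choice `h = 2 * Λ` makes the exponent
at least `-2 * N`, and taking `N`-th roots gives the claim.
-/

open ProbabilityTheory Set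
open scoped ENNReal Matrix Pointwise

section Logistic

/-- The standard logistic distribution on `ℝ`, whose distribution function is `Real.sigmoid`. -/
noncomputable def logisticMeasure : Measure ℝ :=
  StieltjesFunction.measure
    { toFun := Real.sigmoid
      mono' := Real.sigmoid_monotone
      right_continuous' := fun _ => continuous_sigmoid.continuousWithinAt }

instance : IsProbabilityMeasure logisticMeasure :=
  StieltjesFunction.isProbabilityMeasure _ Real.tendsto_sigmoid_atBot Real.tendsto_sigmoid_atTop

lemma sigmoid_add_sub_sigmoid_sub (y h : ℝ) :
    Real.sigmoid (y + h) - Real.sigmoid (y - h) =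
      Real.sinh h / (Real.cosh h + Real.cosh y) := by
  rw [Real.sigmoid_def, Real.sigmoid_def, Real.sinh_eq, Real.cosh_eq, Real.cosh_eq, neg_add,
    neg_sub, sub_eq_add_neg h y, Real.exp_add, Real.exp_add, Real.exp_neg, Real.exp_neg]
  field_simp
  ring

lemma logisticMeasure_Ioc (y h : ℝ) :
    logisticMeasure (Ioc (y - h) (y + h)) =
      ENNReal.ofReal (Real.sinh h / (Real.cosh h + Real.cosh y)) := by
  rw [← sigmoid_add_sub_sigmoid_sub]
  exact StieltjesFunction.measure_Ioc _ _ _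

lemma exp_neg_le_sinh_div_cosh_add_cosh (y : ℝ) {h : ℝ} (hh : 0 < h) :
    Real.exp (-(2 / Real.sinh h * Real.cosh y)) ≤ Real.sinh h / (Real.cosh h + Real.cosh y) := by
  have sinh_pos : 0 < Real.sinh h := Real.sinh_pos_iff.2 hh
  have cosh_le : Real.cosh h ≤ Real.sinh h + Real.cosh y := by
    have exp_le : Real.exp (-h) ≤ 1 := Real.exp_le_one_iff.2 (neg_nonpos.2 hh.le)
    linarith [Real.cosh_sub_sinh h, Real.one_le_cosh y]
  rw [Real.exp_neg, ← inv_div (Real.cosh h + Real.cosh y)]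
  refine inv_anti₀ (by positivity) ?_
  calc (Real.cosh h + Real.cosh y) / Real.sinh h
      ≤ (Real.sinh h + 2 * Real.cosh y) / Real.sinh h :=
        div_le_div_of_nonneg_right (by linarith) sinh_pos.le
    _ = 2 / Real.sinh h * Real.cosh y + 1 := by field_simp; ring
    _ ≤ Real.exp (2 / Real.sinh h * Real.cosh y) := Real.add_one_le_exp _

lemma ofReal_exp_neg_le_logisticMeasure_Ioc (y : ℝ) {h : ℝ} (hh : 0 < h) :
    ENNReal.ofReal (Real.exp (-(2 / Real.sinh h * Real.cosh y))) ≤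
      logisticMeasure (Ioc (y - h) (y + h)) := by
  rw [logisticMeasure_Ioc]
  exact ENNReal.ofReal_le_ofReal (exp_neg_le_sinh_div_cosh_add_cosh y hh)

lemma ofReal_exp_neg_sum_le_pi_logisticMeasure {ι : Type*} [Fintype ι] (y : ι → ℝ) {h : ℝ}
    (hh : 0 < h) :
    ENNReal.ofReal (Real.exp (-∑ j, 2 / Real.sinh h * Real.cosh (y j))) ≤
      Measure.pi (fun _ : ι => logisticMeasure)
        {θ | θ - y ∈ univ.pi fun _ => Ioc (-h) h} := by
  have box_eq : {θ | θ - y ∈ univ.pi fun _ => Ioc (-h) h} =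
      univ.pi fun j => Ioc (y j - h) (y j + h) := by
    ext θ
    simp only [mem_ofPred_eq, mem_univ_pi, Pi.sub_apply, mem_Ioc, neg_lt_sub_iff_lt_add,
      sub_le_iff_le_add, sub_lt_iff_lt_add, add_comm]
  rw [box_eq, Measure.pi_pi, ← Finset.sum_neg_distrib, Real.exp_sum,
    ENNReal.ofReal_prod_of_nonneg fun _ _ => (Real.exp_pos _).le]
  gcongr
  exact ofReal_exp_neg_le_logisticMeasure_Ioc _ hh

end Logistic

section RandomTranslates

lemma ofReal_exp_integral_le_lintegral {α : Type*} [MeasurableSpace α] {ν : Measure α}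
    [IsProbabilityMeasure ν] {f : α → ℝ} (hf : Integrable f ν) :
    ENNReal.ofReal (Real.exp (∫ x, f x ∂ν)) ≤ ∫⁻ x, ENNReal.ofReal (Real.exp (f x)) ∂ν := by
  have exp_nonneg : 0 ≤ᵐ[ν] fun x => Real.exp (f x) := .of_forall fun _ => (Real.exp_pos _).le
  by_cases h_top : ∫⁻ x, ENNReal.ofReal (Real.exp (f x)) ∂ν = ∞
  · simp only [h_top, le_top]
  have exp_integrable : Integrable (fun x => Real.exp (f x)) ν :=
    (lintegral_ofReal_ne_top_iff_integrable
      (Real.continuous_exp.comp_aestronglyMeasurable hf.1) exp_nonneg).1 h_top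
  rw [← ofReal_integral_eq_lintegral_ofReal exp_integrable exp_nonneg]
  exact ENNReal.ofReal_le_ofReal <| convexOn_exp.map_integral_le Real.continuous_exp.continuousOn
    isClosed_univ (.of_forall fun _ => mem_univ _) hf exp_integrable

variable {E F : Type*} [AddCommGroup E] [MeasurableSpace E] [MeasurableAdd E] {μ ν : Measure E}
  [μ.IsAddRightInvariant]

lemma measure_setOf_sub_mem_le [AddCommGroup F] (T : E →+ F) (A : Set F) (θ : F) :
    μ {x | θ - T x ∈ A} ≤ μ (T ⁻¹' (A - A)) := by
  obtain h_empty | ⟨x₀, hx₀⟩ := {x | θ - T x ∈ A}.eq_empty_or_nonempty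
  · simp only [h_empty, measure_empty, zero_le]
  rw [← measure_preimage_add_right μ (-x₀) (T ⁻¹' (A - A))]
  refine measure_mono fun x hx => ⟨θ - T x₀, hx₀, θ - T x, hx, ?_⟩
  simp only [map_add, map_neg]
  abel

lemma lintegral_measure_sub_mem_le [AddCommGroup F] [MeasurableSpace F] [MeasurableSub₂ F]
    [SFinite ν] (hνμ : ν ≤ μ) (ρ : Measure F) [IsProbabilityMeasure ρ] {T : E →+ F}
    (hT : Measurable T) {A : Set F} (hA : MeasurableSet A) :
    ∫⁻ x, ρ {θ | θ - T x ∈ A} ∂ν ≤ μ (T ⁻¹' (A - A)) := by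
  have measurable_incidence : MeasurableSet {p : E × F | p.2 - T p.1 ∈ A} :=
    (measurable_snd.sub (hT.comp measurable_fst)) hA
  calc ∫⁻ x, ρ {θ | θ - T x ∈ A} ∂ν
      = (ν.prod ρ) {p | p.2 - T p.1 ∈ A} := (Measure.prod_apply measurable_incidence).symm
    _ = ∫⁻ θ, ν {x | θ - T x ∈ A} ∂ρ := Measure.prod_apply_symm measurable_incidence
    _ ≤ ∫⁻ _, μ (T ⁻¹' (A - A)) ∂ρ :=
        lintegral_mono fun θ => (hνμ _).trans (measure_setOf_sub_mem_le T A θ)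
    _ = μ (T ⁻¹' (A - A)) := by rw [lintegral_const, measure_univ, mul_one]

theorem ofReal_exp_neg_le_measure_slabs {ι : Type*} [Fintype ι] [IsProbabilityMeasure ν]
    (hνμ : ν ≤ μ) {T : E →+ ι → ℝ} (hT : Measurable T) {b h : ℝ} (hh : 0 < h)
    (cosh_integrable : ∀ j, Integrable (fun x => Real.cosh (T x j)) ν)
    (integral_cosh_le : ∀ j, ∫ x, Real.cosh (T x j) ∂ν ≤ b) :
    ENNReal.ofReal (Real.exp (-(Fintype.card ι * (2 / Real.sinh h * b)))) ≤
      μ {x | ∀ j, |T x j| ≤ 2 * h} := by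
  have sinh_pos : 0 < Real.sinh h := Real.sinh_pos_iff.2 hh
  let cost : E → ℝ := fun x => ∑ j, 2 / Real.sinh h * Real.cosh (T x j)
  have cost_integrable : Integrable cost ν :=
    integrable_finsetSum _ fun j _ => (cosh_integrable j).const_mul _
  have integral_cost_le : ∫ x, cost x ∂ν ≤ Fintype.card ι * (2 / Real.sinh h * b) := by
    rw [integral_finsetSum _ fun j _ => (cosh_integrable j).const_mul _, ← nsmul_eq_mul,
      ← Finset.card_univ]
    refine Finset.sum_le_card_nsmul _ _ _ fun j _ => ?_
    rw [integral_const_mul]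
    exact mul_le_mul_of_nonneg_left (integral_cosh_le j) (div_nonneg zero_le_two sinh_pos.le)
  let box : Set (ι → ℝ) := univ.pi fun _ => Ioc (-h) h
  have box_sub_box_subset : T ⁻¹' (box - box) ⊆ {x | ∀ j, |T x j| ≤ 2 * h} := by
    rintro x ⟨p, hp, q, hq, h_sub⟩ j
    obtain ⟨hp_lower, hp_upper⟩ := hp j (mem_univ j)
    obtain ⟨hq_lower, hq_upper⟩ := hq j (mem_univ j)
    rw [← h_sub]
    exact abs_le.2 ⟨by simp only [Pi.sub_apply]; linarith, by simp only [Pi.sub_apply]; linarith⟩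
  calc ENNReal.ofReal (Real.exp (-(Fintype.card ι * (2 / Real.sinh h * b))))
      ≤ ENNReal.ofReal (Real.exp (∫ x, -cost x ∂ν)) := by
        rw [integral_neg]; gcongr
    _ ≤ ∫⁻ x, ENNReal.ofReal (Real.exp (-cost x)) ∂ν :=
        ofReal_exp_integral_le_lintegral cost_integrable.neg
    _ ≤ ∫⁻ x, Measure.pi (fun _ : ι => logisticMeasure) {θ | θ - T x ∈ box} ∂ν :=
        lintegral_mono fun x => ofReal_exp_neg_sum_le_pi_logisticMeasure (T x) hh
    _ ≤ μ (T ⁻¹' (box - box)) :=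
        lintegral_measure_sub_mem_le hνμ _ hT (.univ_pi fun _ => measurableSet_Ioc)
    _ ≤ μ {x | ∀ j, |T x j| ≤ 2 * h} := measure_mono box_sub_box_subset

end RandomTranslates

section Subgaussian

variable {α : Type*} [MeasurableSpace α] {ν : Measure α} {X : α → ℝ} {c : NNReal}

lemma integrable_cosh_of_hasSubgaussianMGF (hX : HasSubgaussianMGF X c ν) :
    Integrable (fun x => Real.cosh (X x)) ν := by
  simp only [Real.cosh_eq]
  refine Integrable.div_const (.add ?_ ?_) 2
  · simpa using hX.integrable_exp_mul 1
  · simpa using hX.integrable_exp_mul (-1)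

lemma integral_cosh_le_of_hasSubgaussianMGF (hX : HasSubgaussianMGF X c ν) :
    ∫ x, Real.cosh (X x) ∂ν ≤ Real.exp (c / 2) := by
  have h_pos : ∫ x, Real.exp (X x) ∂ν ≤ Real.exp (c / 2) := by
    simpa [mgf] using hX.mgf_le 1
  have h_neg : ∫ x, Real.exp (-X x) ∂ν ≤ Real.exp (c / 2) := by
    simpa [mgf] using hX.mgf_le (-1)
  simp only [Real.cosh_eq]
  rw [integral_div, integral_add (by simpa using hX.integrable_exp_mul 1)
    (by simpa using hX.integrable_exp_mul (-1))]
  linarith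

end Subgaussian

section Cube

variable {κ : Type*} [Fintype κ]

/-- The uniform probability measure on the unit cube `[-1/2, 1/2]^κ`. -/
noncomputable def centeredCubeMeasure (κ : Type*) [Fintype κ] : Measure (κ → ℝ) :=
  Measure.pi fun _ => volume.restrict (Icc (-(1 / 2) : ℝ) (1 / 2))

instance : IsProbabilityMeasure (volume.restrict (Icc (-(1 / 2) : ℝ) (1 / 2))) :=
  ⟨by rw [Measure.restrict_apply_univ, Real.volume_Icc]; norm_num⟩

instance : IsProbabilityMeasure (centeredCubeMeasure κ) :=
  inferInstanceAs (IsProbabilityMeasure (Measure.pi _))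

lemma centeredCubeMeasure_le_volume : centeredCubeMeasure κ ≤ volume := by
  rw [centeredCubeMeasure, ← Measure.restrict_pi_pi]
  exact Measure.restrict_le_self

lemma hasSubgaussianMGF_id_restrict_Icc :
    HasSubgaussianMGF id (1 / 4) (volume.restrict (Icc (-(1 / 2) : ℝ) (1 / 2))) := by
  have integral_id_eq_zero : ∫ x in Icc (-(1 / 2) : ℝ) (1 / 2), id x = 0 := by
    rw [integral_Icc_eq_integral_Ioc, ← intervalIntegral.integral_of_le (by norm_num)]
    simp
  have parameter_eq : (‖(1 / 2 : ℝ) - -(1 / 2)‖₊ / 2) ^ 2 = 1 / 4 := by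
    norm_num
  rw [← parameter_eq]
  exact hasSubgaussianMGF_of_mem_Icc_of_integral_eq_zero aemeasurable_id
    (ae_restrict_mem measurableSet_Icc) integral_id_eq_zero

lemma hasSubgaussianMGF_eval_centeredCubeMeasure (i : κ) :
    HasSubgaussianMGF (fun x => x i) (1 / 4) (centeredCubeMeasure κ) := by
  refine HasSubgaussianMGF.of_map (X := id) (measurable_pi_apply i).aemeasurable ?_
  rw [centeredCubeMeasure, (measurePreserving_eval _ i).map_eq]
  exact hasSubgaussianMGF_id_restrict_Icc

lemma hasSubgaussianMGF_dotProduct_centeredCubeMeasure (v : κ → ℝ) :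
    HasSubgaussianMGF (fun x => x ⬝ᵥ v) (∑ i, ‖v i‖₊ ^ 2 * (1 / 4)) (centeredCubeMeasure κ) := by
  refine HasSubgaussianMGF.sum_of_iIndepFun
    (iIndepFun_pi (X := fun i y => y * v i) fun i => by fun_prop) fun i _ => ?_
  simp only [mul_comm _ (v i)]
  have parameter_eq : ‖v i‖₊ ^ 2 = ⟨v i ^ 2, sq_nonneg _⟩ := by
    ext
    rw [NNReal.coe_pow, coe_nnnorm, Real.norm_eq_abs, sq_abs]
    rfl
  rw [parameter_eq]
  exact (hasSubgaussianMGF_eval_centeredCubeMeasure i).const_mul (v i)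

end Cube

section Volume

variable {κ ι : Type*} [Fintype κ] [Fintype ι]

lemma exp_sub_one_le_sinh {z : ℝ} (hz : 1 ≤ z) : Real.exp (z - 1) ≤ Real.sinh z := by
  have exp_neg_le : Real.exp (-z) ≤ 1 / 2 := by
    rw [Real.exp_neg, one_div]
    exact inv_anti₀ two_pos (by linarith [Real.add_one_le_exp z])
  have one_le_exp : 1 ≤ Real.exp (z - 1) := Real.one_le_exp (sub_nonneg.2 hz)
  have exp_eq : Real.exp z = Real.exp (z - 1) * Real.exp 1 := by
    rw [← Real.exp_add, sub_add_cancel]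
  rw [Real.sinh_eq, exp_eq]
  nlinarith [Real.exp_one_gt_d9]

lemma ofReal_exp_neg_le_volume_vecMul (B : Matrix κ ι ℝ) {Λ : ℝ} (hΛ : 1 ≤ Λ)
    (hcard : Fintype.card ι ≤ Fintype.card κ * Real.exp (Λ - 1))
    (hB : ∀ j, ∑ i, B i j ^ 2 ≤ 8 * Λ) :
    ENNReal.ofReal (Real.exp (-(2 * Fintype.card κ))) ≤
      volume {x | ∀ j, |(x ᵥ* B) j| ≤ 4 * Λ} := by
  have subgaussian (j : ι) := hasSubgaussianMGF_dotProduct_centeredCubeMeasure fun i => B i j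
  have integral_cosh_le (j : ι) :
      ∫ x, Real.cosh ((x ᵥ* B) j) ∂centeredCubeMeasure κ ≤ Real.exp Λ := by
    refine (integral_cosh_le_of_hasSubgaussianMGF (subgaussian j)).trans (Real.exp_le_exp.2 ?_)
    push_cast
    simp only [Real.norm_eq_abs, sq_abs]
    rw [← Finset.sum_mul]
    linarith [hB j]
  have exp_mul_exp_le : Real.exp (Λ - 1) * Real.exp Λ ≤ Real.sinh (2 * Λ) := by
    rw [← Real.exp_add]
    convert exp_sub_one_le_sinh (z := 2 * Λ) (by linarith) using 2
    ring
  have sinh_pos : 0 < Real.sinh (2 * Λ) := Real.sinh_pos_iff.2 (by linarith)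
  have cost_le : Fintype.card ι * (2 / Real.sinh (2 * Λ) * Real.exp Λ) ≤ 2 * Fintype.card κ :=
    calc Fintype.card ι * (2 / Real.sinh (2 * Λ) * Real.exp Λ)
        ≤ Fintype.card κ * Real.exp (Λ - 1) * (2 / Real.sinh (2 * Λ) * Real.exp Λ) := by gcongr
      _ = 2 * Fintype.card κ * (Real.exp (Λ - 1) * Real.exp Λ / Real.sinh (2 * Λ)) := by ring
      _ ≤ 2 * Fintype.card κ :=
        mul_le_of_le_one_right (by positivity) ((div_le_one sinh_pos).2 exp_mul_exp_le)
  have slabs := ofReal_exp_neg_le_measure_slabs centeredCubeMeasure_le_volume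
    (T := B.vecMulLinear.toAddMonoidHom)
    (LinearMap.continuous_of_finiteDimensional B.vecMulLinear).measurable
    (by linarith : 0 < 2 * Λ)
    (fun j => integrable_cosh_of_hasSubgaussianMGF (subgaussian j)) integral_cosh_le
  have radius_eq : 2 * (2 * Λ) = 4 * Λ := by ring
  rw [radius_eq] at slabs
  exact (ENNReal.ofReal_le_ofReal (Real.exp_le_exp.2 (neg_le_neg cost_le))).trans slabs

theorem ofReal_pow_le_volume_vecMul (B : Matrix κ ι ℝ) {Λ σ δ : ℝ} (hΛ : 1 ≤ Λ) (hσ : 0 < σ)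
    (hδ : 0 < δ) (hcard : Fintype.card ι ≤ Fintype.card κ * Real.exp (Λ - 1))
    (hB : ∀ j, ∑ i, B i j ^ 2 ≤ σ ^ 2) :
    ENNReal.ofReal ((δ / (σ * √(2 * Λ)) * Real.exp (-2)) ^ Fintype.card κ) ≤
      volume {x | ∀ j, |(x ᵥ* B) j| ≤ δ} := by
  have sqrt_pos : 0 < √(2 * Λ) := Real.sqrt_pos.2 (by linarith)
  have sq_sqrt : √(2 * Λ) ^ 2 = 2 * Λ := Real.sq_sqrt (by linarith)
  set β : ℝ := 2 * √(2 * Λ) / σ with hβ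
  set r : ℝ := δ / (σ * √(2 * Λ)) with hr
  have β_pos : 0 < β := by positivity
  have r_pos : 0 < r := div_pos hδ (mul_pos hσ sqrt_pos)
  have rescaled_columns (j : ι) : ∑ i, (β • B) i j ^ 2 ≤ 8 * Λ :=
    calc ∑ i, (β • B) i j ^ 2 = β ^ 2 * ∑ i, B i j ^ 2 := by
          simp only [Matrix.smul_apply, smul_eq_mul, mul_pow, Finset.mul_sum]
      _ ≤ β ^ 2 * σ ^ 2 := by gcongr; exact hB j
      _ = 4 * √(2 * Λ) ^ 2 := by rw [hβ]; field_simp; norm_num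
      _ = 8 * Λ := by rw [sq_sqrt]; ring
  have smul_subset :
      r • {x | ∀ j, |(x ᵥ* (β • B)) j| ≤ 4 * Λ} ⊆ {x | ∀ j, |(x ᵥ* B) j| ≤ δ} := by
    rintro _ ⟨x, hx, rfl⟩ j
    have entry_eq : ((r • x) ᵥ* B) j = r / β * (x ᵥ* (β • B)) j := by
      simp only [Matrix.smul_vecMul, Matrix.vecMul_smul, Pi.smul_apply, smul_eq_mul]
      rw [← mul_assoc, div_mul_cancel₀ _ β_pos.ne']
    calc |((r • x) ᵥ* B) j| = r / β * |(x ᵥ* (β • B)) j| := by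
          rw [entry_eq, abs_mul, abs_of_pos (by positivity)]
      _ ≤ r / β * (2 * √(2 * Λ) ^ 2) := by
          rw [sq_sqrt]; gcongr; linarith [hx j]
      _ = δ := by rw [hr, hβ]; field_simp
  calc ENNReal.ofReal ((r * Real.exp (-2)) ^ Fintype.card κ)
      = ENNReal.ofReal (r ^ Fintype.card κ) *
          ENNReal.ofReal (Real.exp (-(2 * Fintype.card κ))) := by
        rw [← ENNReal.ofReal_mul (by positivity), mul_pow, ← Real.exp_nat_mul]
        ring_nf
    _ ≤ ENNReal.ofReal (r ^ Fintype.card κ) *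
          volume {x | ∀ j, |(x ᵥ* (β • B)) j| ≤ 4 * Λ} := by
        gcongr
        exact ofReal_exp_neg_le_volume_vecMul _ hΛ hcard rescaled_columns
    _ = volume (r • {x | ∀ j, |(x ᵥ* (β • B)) j| ≤ 4 * Λ}) := by
        rw [Measure.addHaar_smul_of_nonneg _ r_pos.le, Module.finrank_fintype_fun_eq_card]
    _ ≤ volume {x | ∀ j, |(x ᵥ* B) j| ≤ δ} := measure_mono smul_subset

end Volume

section Discretization

variable {Ω κ ι : Type*} [Fintype κ] {φ : κ → Ω → ℝ} {ξ : ι → Ω} {D : ℝ}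

/-- The set `B_Φ(L_∞)` of coefficient vectors of the unit ball of `span Φ` in the uniform norm. -/
def supNormCoeffBall (φ : κ → Ω → ℝ) : Set (κ → ℝ) :=
  {a | supNorm (fun ω => ∑ i, a i * φ i ω) ≤ 1}

/-- The points `ξ` discretize the uniform norm on `span φ` with constant `D`. For an empty family
of points the supremum is the junk value `0`. -/
def DiscretizesSupNorm (φ : κ → Ω → ℝ) (ξ : ι → Ω) (D : ℝ) : Prop :=
  ∀ f ∈ Submodule.span ℝ (range φ), supNorm f ≤ D * ⨆ j, |f (ξ j)|

/-- The matrix `(φ_i(ξ^j))_{i,j}`, for which `a ᵥ* samplingMatrix φ ξ` lists the values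
of `∑ i, a i * φ i` at the points `ξ`. -/
def samplingMatrix (φ : κ → Ω → ℝ) (ξ : ι → Ω) : Matrix κ ι ℝ :=
  Matrix.of fun i j => φ i (ξ j)

lemma abs_sum_mul_le_supNorm (hφ : ∀ i, ∃ B : ℝ, ∀ ω, |φ i ω| ≤ B) (a : κ → ℝ) (ω : Ω) :
    |∑ i, a i * φ i ω| ≤ supNorm fun ω => ∑ i, a i * φ i ω := by
  choose B hB using hφ
  refine le_ciSup (f := fun ω => |∑ i, a i * φ i ω|) ⟨∑ i, |a i| * B i, ?_⟩ ω
  rintro _ ⟨ω, rfl⟩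
  refine (Finset.abs_sum_le_sum_abs _ _).trans (Finset.sum_le_sum fun i _ => ?_)
  rw [abs_mul]
  exact mul_le_mul_of_nonneg_left (hB i ω) (abs_nonneg _)

namespace DiscretizesSupNorm

lemma supNorm_sum_mul_le (hξ : DiscretizesSupNorm φ ξ D) (a : κ → ℝ) :
    supNorm (fun ω => ∑ i, a i * φ i ω) ≤ D * ⨆ j, |(a ᵥ* samplingMatrix φ ξ) j| := by
  refine hξ _ ?_
  convert Submodule.sum_smul_mem (t := Finset.univ) _ a
    fun i _ => Submodule.subset_span (mem_range_self (f := φ) i) using 1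
  ext ω
  simp only [Finset.sum_apply, Pi.smul_apply, smul_eq_mul]

lemma setOf_abs_vecMul_le_subset_supNormCoeffBall (hξ : DiscretizesSupNorm φ ξ D) (hD : 0 < D) :
    {a | ∀ j, |(a ᵥ* samplingMatrix φ ξ) j| ≤ D⁻¹} ⊆ supNormCoeffBall φ := fun a ha =>
  calc supNorm (fun ω => ∑ i, a i * φ i ω)
      ≤ D * ⨆ j, |(a ᵥ* samplingMatrix φ ξ) j| := hξ.supNorm_sum_mul_le a
    _ ≤ D * D⁻¹ := by gcongr; exact Real.iSup_le ha (by positivity)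
    _ = 1 := mul_inv_cancel₀ hD.ne'

lemma ker_vecMulLinear_eq_bot (hξ : DiscretizesSupNorm φ ξ D) (hli : LinearIndependent ℝ φ)
    (hφ : ∀ i, ∃ B : ℝ, ∀ ω, |φ i ω| ≤ B) :
    LinearMap.ker (samplingMatrix φ ξ).vecMulLinear = ⊥ := by
  refine LinearMap.ker_eq_bot'.2 fun a (ha : a ᵥ* samplingMatrix φ ξ = 0) => ?_
  have supNorm_le_zero := hξ.supNorm_sum_mul_le a
  simp only [ha, Pi.zero_apply, abs_zero, Real.iSup_const_zero, mul_zero] at supNorm_le_zero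
  refine funext (Fintype.linearIndependent_iff.1 hli a (funext fun ω => ?_))
  simpa using (abs_sum_mul_le_supNorm hφ a ω).trans supNorm_le_zero

lemma volume_supNormCoeffBall_lt_top [Finite ι] (hξ : DiscretizesSupNorm φ ξ D)
    (hli : LinearIndependent ℝ φ) (hφ : ∀ i, ∃ B : ℝ, ∀ ω, |φ i ω| ≤ B) :
    volume (supNormCoeffBall φ) < ∞ := by
  have := Fintype.ofFinite ι
  obtain ⟨C, -, hC⟩ := LinearMap.exists_antilipschitzWith _ (hξ.ker_vecMulLinear_eq_bot hli hφ)
  refine ((hC.isBounded_preimage (Metric.isBounded_closedBall (x := 0) (r := 1))).subset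
    fun a ha => ?_).measure_lt_top
  rw [mem_preimage, mem_closedBall_zero_iff, pi_norm_le_iff_of_nonneg zero_le_one]
  exact fun j => (abs_sum_mul_le_supNorm hφ a (ξ j)).trans ha

variable [Fintype ι]

lemma card_le_card (hξ : DiscretizesSupNorm φ ξ D) (hli : LinearIndependent ℝ φ)
    (hφ : ∀ i, ∃ B : ℝ, ∀ ω, |φ i ω| ≤ B) : Fintype.card κ ≤ Fintype.card ι := by
  simpa using LinearMap.finrank_le_finrank_of_injective
    (LinearMap.ker_eq_bot.1 (hξ.ker_vecMulLinear_eq_bot hli hφ))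

theorem div_le_volume_supNormCoeffBall_rpow [Nonempty κ] (hξ : DiscretizesSupNorm φ ξ D)
    (hD : 0 < D) (hli : LinearIndependent ℝ φ) (hφ : ∀ i, ∃ B : ℝ, ∀ ω, |φ i ω| ≤ B)
    {Λ σ : ℝ} (hΛ : 1 ≤ Λ) (hσ : 0 < σ) (hsq : ∀ ω, ∑ i, φ i ω ^ 2 ≤ σ ^ 2)
    (hcard : Fintype.card ι ≤ Fintype.card κ * Real.exp (Λ - 1)) :
    D⁻¹ / (σ * √(2 * Λ)) * Real.exp (-2) ≤
      (volume (supNormCoeffBall φ)).toReal ^ ((1 : ℝ) / Fintype.card κ) := by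
  have pow_le : (D⁻¹ / (σ * √(2 * Λ)) * Real.exp (-2)) ^ Fintype.card κ ≤
      (volume (supNormCoeffBall φ)).toReal := by
    rw [← ENNReal.ofReal_le_iff_le_toReal (hξ.volume_supNormCoeffBall_lt_top hli hφ).ne]
    exact (ofReal_pow_le_volume_vecMul (samplingMatrix φ ξ) hΛ hσ (inv_pos.2 hD) hcard
      fun j => hsq (ξ j)).trans
        (measure_mono (hξ.setOf_abs_vecMul_le_subset_supNormCoeffBall hD))
  rw [one_div]
  exact (Real.le_rpow_inv_iff_of_pos (by positivity) ENNReal.toReal_nonneg (by positivity)).2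
    (by rwa [Real.rpow_natCast])

end DiscretizesSupNorm

end Discretization

lemma exp_neg_four_div_le {N t K D Λ : ℝ} (hN : 0 < N) (ht : 0 < t) (hK : 0 < K) (hD : 0 < D)
    (hΛ : 0 < Λ)
    (h : D⁻¹ / (√N * t * √(2 * Λ)) * Real.exp (-2) ≤ K * N ^ (-(1 : ℝ) / 2)) :
    Real.exp (-4) / 2 / (t * K * D) ^ 2 ≤ Λ := by
  have rpow_eq : N ^ (-(1 : ℝ) / 2) = (√N)⁻¹ := by
    rw [Real.sqrt_eq_rpow, neg_div, Real.rpow_neg hN.le]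
  have exp_le : Real.exp (-2) ≤ t * K * D * √(2 * Λ) := by
    rw [rpow_eq] at h
    field_simp at h
    linarith
  have exp_sq : Real.exp (-4) = Real.exp (-2) ^ 2 := by
    rw [← Real.exp_nat_mul]; norm_num
  rw [div_div, div_le_iff₀ (by positivity), exp_sq]
  calc Real.exp (-2) ^ 2 ≤ (t * K * D * √(2 * Λ)) ^ 2 := by gcongr
    _ = Λ * (2 * (t * K * D) ^ 2) := by
        rw [mul_pow, Real.sq_sqrt (by positivity)]; ring

/-- Theorem 7.1: there is an absolute constant `c > 0` such that if a linearly
independent system `φ` of bounded functions satisfies `∑_i φ_i(ω)² ≤ Nt²`,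
`vol(B_Φ(L_∞))^{1/N} ≤ K N^{-1/2}`, and the LDI `‖f‖_∞ ≤ D max_j |f(ξ^j)|` holds on
`X_N = span Φ`, then `m ≥ (N/e) e^{c(tKD)^{-2}}`. -/
theorem stmt_18 :
    ∃ c : ℝ, 0 < c ∧
      ∀ (Ω : Type), Nonempty Ω →
      ∀ (N : ℕ) (φ : Fin N → Ω → ℝ) (t K D : ℝ),
        0 < t → 0 < K → 0 < D →
        LinearIndependent ℝ φ →
        (∀ i, ∃ B : ℝ, ∀ ω, |φ i ω| ≤ B) →
        (∀ ω, ∑ i, (φ i ω) ^ 2 ≤ N * t ^ 2) →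
        (volume {a : Fin N → ℝ | supNorm (fun ω => ∑ i, a i * φ i ω) ≤ 1}).toReal
            ^ ((1 : ℝ) / N) ≤ K * (N : ℝ) ^ (-(1 : ℝ) / 2) →
        ∀ (m : ℕ) (ξ : Fin m → Ω),
          (∀ f ∈ Submodule.span ℝ (Set.range φ), supNorm f ≤ D * ⨆ j, |f (ξ j)|) →
          (N : ℝ) / Real.exp 1 * Real.exp (c / (t * K * D) ^ 2) ≤ m := by
  refine ⟨Real.exp (-4) / 2, by positivity, ?_⟩
  intro Ω _ N φ t K D ht hK hD hli hφ hsq hvol m ξ (hξ : DiscretizesSupNorm φ ξ D)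
  obtain rfl | hN := N.eq_zero_or_pos
  · simp
  have : NeZero N := ⟨hN.ne'⟩
  have hN' : (0 : ℝ) < N := Nat.cast_pos.2 hN
  have one_le_ratio : 1 ≤ (m : ℝ) / N := by
    rw [one_le_div hN', Nat.cast_le]
    simpa using hξ.card_le_card hli hφ
  set Λ : ℝ := 1 + Real.log (m / N) with hΛ_def
  have hΛ : 1 ≤ Λ := le_add_of_nonneg_right (Real.log_nonneg one_le_ratio)
  have card_eq : (m : ℝ) = N * Real.exp (Λ - 1) := by
    rw [hΛ_def, add_sub_cancel_left, Real.exp_log (by linarith), mul_div_cancel₀ _ hN'.ne']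
  have root_ge := hξ.div_le_volume_supNormCoeffBall_rpow hD hli hφ hΛ (σ := √N * t)
    (by positivity) (by simpa [mul_pow] using hsq) (by simpa using card_eq.le)
  rw [Fintype.card_fin] at root_ge
  calc (N : ℝ) / Real.exp 1 * Real.exp (Real.exp (-4) / 2 / (t * K * D) ^ 2)
      ≤ N / Real.exp 1 * Real.exp Λ := by
        gcongr
        exact exp_neg_four_div_le hN' ht hK hD (by linarith) (root_ge.trans hvol)
    _ = m := by rw [card_eq, Real.exp_sub]; ring
end

section
/- There exists an absolute constant c > 0 with the following property. Let Ω be a nonempty set and let Φ = {φ_1,…,φ_N} be a system of bounded real-valued functions on Ω which is a uniformly bounded Sidon system: β ∑_{i=1}^N |a_i| ≤ ‖∑_{i=1}^N a_i φ_i‖_∞ for all real a_1,…,a_N, and ‖φ_i‖_∞ ≤ B for i = 1,…,N, where β, B > 0. Let X_N := span{φ_1,…,φ_N}. If points ξ^1,…,ξ^m ∈ Ω satisfy ‖f‖_∞ ≤ D max_{1≤j≤m}|f(ξ^j)| for all f ∈ X_N, then m ≥ (N/e)·exp(c β² N/(B² D²)). -/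
open MeasureTheory

/-!
Put `γ = β / D` and let `v j = (φ i (ξ j))ᵢ` be the sample vectors, which lie in `[-B, B]ᴺ`. The
Sidon and discretization inequalities give `γ ‖a‖₁ ≤ max_j |⟨v j, a⟩|` for all `a`, so by duality
the convex hull of the `2m` vectors `± v j` contains the cube `[-γ, γ]ᴺ`. A greedy form of
Maurey's lemma approximates each vertex of the cube by an average of `k ≈ 32 B² / γ²` of these
vectors so well that two vertices with the same average differ in at most `N / 8` coordinates.
Comparing the volume of a Hamming ball with `2ᴺ`, at least `exp (N / 8)` multisets of size `k`
occur, whereas there are at most `(3 e m / k)ᵏ` of them. Counting multisets rather than `k`-tuples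
is what produces the factor `N` in front of the exponential.
-/

open Finset
open scoped RealInnerProductSpace

section Maurey

variable {E ι : Type*} [NormedAddCommGroup E] [InnerProductSpace ℝ E] {R : ℝ}

-- Greedily add a vector that makes a nonacute angle with the partial sum.
theorem exists_sym_norm_sq_sum_le {z : ι → E} (hz : ∀ j, ‖z j‖ ≤ R)
    (h : ∀ x : E, ∃ j, ⟪x, z j⟫ ≤ 0) (k : ℕ) :
    ∃ s : Sym ι k, ‖((s : Multiset ι).map z).sum‖ ^ 2 ≤ k * R ^ 2 := by
  induction k with
  | zero => exact ⟨Sym.nil, by simp⟩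
  | succ k ih =>
    obtain ⟨s, hs⟩ := ih
    set S := ((s : Multiset ι).map z).sum
    obtain ⟨j, hj⟩ := h S
    have hzj : ‖z j‖ ^ 2 ≤ R ^ 2 := by gcongr; exact hz j
    refine ⟨j ::ₛ s, ?_⟩
    calc ‖(((j ::ₛ s : Sym ι (k + 1)) : Multiset ι).map z).sum‖ ^ 2
        = ‖S + z j‖ ^ 2 := by
          rw [Sym.coe_cons, Multiset.map_cons, Multiset.sum_cons, add_comm]
      _ = ‖S‖ ^ 2 + 2 * ⟪S, z j⟫ + ‖z j‖ ^ 2 := norm_add_sq_real S (z j)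
      _ ≤ (k + 1 : ℕ) * R ^ 2 := by push_cast; linarith

theorem exists_code_norm_sub_sq_le {α : Type*} {w : ι → E} {u : α → E} (hR : ∀ a j, ‖w j - u a‖ ≤ R)
    (h : ∀ a x, ∃ j, ⟪x, w j - u a⟫ ≤ 0) (k : ℕ) :
    ∃ code : α → Sym ι k, ∀ a b, code a = code b → k * ‖u a - u b‖ ^ 2 ≤ 4 * R ^ 2 := by
  choose code hcode using fun a ↦ exists_sym_norm_sq_sum_le (hR a) (h a) k
  refine ⟨code, fun a b hab ↦ ?_⟩
  set S : α → E := fun c ↦ ((code a : Multiset ι).map fun j ↦ w j - u c).sum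
  have hSa : ‖S a‖ ^ 2 ≤ k * R ^ 2 := hcode a
  have hSb : ‖S b‖ ^ 2 ≤ k * R ^ 2 := by simpa only [S, hab] using hcode b
  have hdiff : S b - S a = (k : ℝ) • (u a - u b) := by
    simp only [S, ← Multiset.sum_map_sub, sub_sub_sub_cancel_left, Multiset.map_const',
      Multiset.sum_replicate, Sym.card_coe, Nat.cast_smul_eq_nsmul]
  have hpar : ‖S b - S a‖ ^ 2 ≤ 2 * (‖S b‖ ^ 2 + ‖S a‖ ^ 2) := by
    have := parallelogram_law_with_norm ℝ (S b) (S a)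
    nlinarith [sq_nonneg ‖S b + S a‖]
  rw [hdiff, norm_smul, Real.norm_natCast, mul_pow] at hpar
  obtain rfl | hk := k.eq_zero_or_pos
  · simp only [Nat.cast_zero, zero_mul]; positivity
  refine le_of_mul_le_mul_left ?_ (Nat.cast_pos (α := ℝ).2 hk)
  linarith

end Maurey

section Hamming

variable {κ α : Type*} [Fintype κ] [Fintype α] [DecidableEq α]

theorem sum_pow_hammingDist [DecidableEq κ] {A : Type*} [CommRing A] (q : A) (y : κ → α) :
    ∑ x, q ^ hammingDist x y = (1 + (Fintype.card α - 1) * q) ^ Fintype.card κ := by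
  have hcoord (i : κ) : ∑ b, (if b ≠ y i then q else 1) = 1 + (Fintype.card α - 1) * q := by
    rw [← Finset.add_sum_erase _ _ (mem_univ (y i)),
      Finset.sum_congr rfl fun b hb ↦ if_pos (ne_of_mem_erase hb)]
    have : 1 ≤ Fintype.card α := Fintype.card_pos_iff.2 ⟨y i⟩
    simp [card_erase_of_mem, Nat.cast_sub this]
  calc ∑ x, q ^ hammingDist x y
      = ∑ x : κ → α, ∏ i, if x i ≠ y i then q else 1 := by
        simp only [hammingDist, prod_ite, prod_const, one_pow, mul_one]
    _ = ∏ i, ∑ b, if b ≠ y i then q else 1 :=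
        (Fintype.prod_sum fun i b ↦ if b ≠ y i then q else 1).symm
    _ = (1 + (Fintype.card α - 1) * q) ^ Fintype.card κ := by
        simp only [hcoord, prod_const, card_univ]

theorem card_le_of_hammingDist_le {t : ℝ} (ht : 0 ≤ t) (r : ℝ) (y : κ → α) (F : Finset (κ → α))
    (hF : ∀ x ∈ F, (hammingDist x y : ℝ) ≤ r) :
    (#F : ℝ) ≤
      Real.exp (t * r) * (1 + (Fintype.card α - 1) * Real.exp (-t)) ^ Fintype.card κ := by
  classical
  rw [← sum_pow_hammingDist, mul_sum]
  calc (#F : ℝ) = ∑ x ∈ F, 1 := by simp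
    _ ≤ ∑ x ∈ F, Real.exp (t * r) * Real.exp (-t) ^ hammingDist x y := by
        refine sum_le_sum fun x hx ↦ ?_
        rw [← Real.exp_nat_mul, ← Real.exp_add]
        refine Real.one_le_exp ?_
        linarith [mul_le_mul_of_nonneg_left (hF x hx) ht]
    _ ≤ ∑ x, Real.exp (t * r) * Real.exp (-t) ^ hammingDist x y :=
        sum_le_univ_sum_of_nonneg fun x ↦ by positivity

theorem one_add_exp_neg_one_mul_exp_quarter_lt_two :
    (1 + Real.exp (-1)) * Real.exp (1 / 4) < 2 := by
  have hneg : Real.exp (-1) < 0.4 := Real.exp_neg_one_lt_d9.trans (by norm_num)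
  have hquarter : Real.exp (1 / 4) ≤ 4 / 3 :=
    (Real.exp_bound_div_one_sub_of_interval (by norm_num) (by norm_num)).trans (by norm_num)
  calc (1 + Real.exp (-1)) * Real.exp (1 / 4) ≤ (1 + 0.4) * (4 / 3) := by gcongr
    _ < 2 := by norm_num

theorem exp_card_div_eight_le_card_of_hammingDist_le {γ : Type*} [Fintype γ]
    (code : (κ → Bool) → γ)
    (h : ∀ x y, code x = code y → 8 * hammingDist x y ≤ Fintype.card κ) :
    Real.exp (Fintype.card κ / 8) ≤ Fintype.card γ := by
  classical
  set n := Fintype.card κ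
  set V : ℝ := Real.exp (n / 8) * (1 + Real.exp (-1)) ^ n
  have hfiber (c : γ) : (#{x | code x = c} : ℝ) ≤ V := by
    obtain hempty | ⟨y, hy⟩ := (univ.filter fun x ↦ code x = c).eq_empty_or_nonempty
    · rw [hempty, card_empty, Nat.cast_zero]; positivity
    have hdist (x : κ → Bool) (hx : x ∈ univ.filter fun x ↦ code x = c) :
        (hammingDist x y : ℝ) ≤ n / 8 := by
      have hxy := h x y ((mem_filter.1 hx).2.trans (mem_filter.1 hy).2.symm)
      rw [le_div_iff₀' (by norm_num)]
      exact_mod_cast hxy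
    have hbinary : (Fintype.card Bool - 1 : ℝ) = 1 := by norm_num
    simpa only [hbinary, one_mul] using card_le_of_hammingDist_le zero_le_one (n / 8) y _ hdist
  have hcover : (2 : ℝ) ^ n ≤ Fintype.card γ * V := by
    by_contra! hlt
    obtain ⟨c, hc⟩ := Fintype.exists_lt_card_fiber_of_nsmul_lt_card code (b := V) (by simpa [n])
    exact hc.not_ge (hfiber c)
  have hvolume : Real.exp (n / 8) * V ≤ 2 ^ n :=
    calc Real.exp (n / 8) * V = ((1 + Real.exp (-1)) * Real.exp (1 / 4)) ^ n := by
          rw [mul_pow, ← Real.exp_nat_mul, ← mul_assoc, ← Real.exp_add, mul_comm]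
          ring_nf
      _ ≤ 2 ^ n := by gcongr; exact one_add_exp_neg_one_mul_exp_quarter_lt_two.le
  exact le_of_mul_le_mul_right (hvolume.trans hcover) (by positivity)

end Hamming

section Norming

variable {ι κ : Type*} {v : ι → κ → ℝ} {γ B : ℝ}

/-- The vertex of the cube `[-γ, γ]^κ` with sign pattern `e`, as a point of Euclidean space.
The value `true` stands for the sign `+`. -/
noncomputable def cubeVertex (γ : ℝ) (e : κ → Bool) : EuclideanSpace ℝ κ :=
  WithLp.toLp 2 fun i ↦ if e i then γ else -γ

theorem abs_cubeVertex (γ : ℝ) (e : κ → Bool) (i : κ) : |cubeVertex γ e i| = |γ| := by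
  cases h : e i <;> simp [cubeVertex, h]

/-- The family `± v j`, as points of Euclidean space: the vectors whose averages approximate the
cube. The left summand carries `v`, the right one `-v`. -/
noncomputable def signedFamily (v : ι → κ → ℝ) : ι ⊕ ι → EuclideanSpace ℝ κ :=
  Sum.elim (fun j ↦ WithLp.toLp 2 (v j)) fun j ↦ -WithLp.toLp 2 (v j)

theorem abs_signedFamily_le (hB : ∀ j i, |v j i| ≤ B) (s : ι ⊕ ι) (i : κ) :
    |signedFamily v s i| ≤ B := by
  cases s <;> simpa [signedFamily] using hB _ i

variable [Fintype κ]

theorem norm_cubeVertex_sub_sq (γ : ℝ) (e e' : κ → Bool) :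
    ‖cubeVertex γ e - cubeVertex γ e'‖ ^ 2 = 4 * γ ^ 2 * hammingDist e e' := by
  have hcoord (i : κ) : (cubeVertex γ e i - cubeVertex γ e' i) ^ 2 =
      if e i ≠ e' i then 4 * γ ^ 2 else 0 := by
    cases h : e i <;> cases h' : e' i <;> simp [cubeVertex, h, h'] <;> ring
  simp only [EuclideanSpace.real_norm_sq_eq, PiLp.sub_apply, hcoord, ← sum_filter, sum_const,
    nsmul_eq_mul, hammingDist, mul_comm]

theorem norm_sq_le_card_mul_of_abs_le {x : EuclideanSpace ℝ κ} {C : ℝ} (hx : ∀ i, |x i| ≤ C) :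
    ‖x‖ ^ 2 ≤ Fintype.card κ * C ^ 2 := by
  rw [EuclideanSpace.real_norm_sq_eq, ← nsmul_eq_mul, ← card_univ]
  exact sum_le_card_nsmul _ _ _ fun i _ ↦ sq_le_sq' (abs_le.1 (hx i)).1 (abs_le.1 (hx i)).2

theorem inner_le_mul_sum_abs {u : EuclideanSpace ℝ κ} (hu : ∀ i, |u i| ≤ γ)
    (x : EuclideanSpace ℝ κ) : ⟪x, u⟫ ≤ γ * ∑ i, |x i| := by
  rw [PiLp.inner_apply, mul_sum]
  refine sum_le_sum fun i _ ↦ ?_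
  calc ⟪x i, u i⟫ ≤ |u i| * |x i| := by
        simpa only [Real.norm_eq_abs, mul_comm] using real_inner_le_norm (x i) (u i)
    _ ≤ γ * |x i| := by gcongr; exact hu i

/-- The functionals `a ↦ a ⬝ᵥ v j` norm `ℓ¹` on `κ → ℝ` up to the factor `γ`. Dually, the convex
hull of the vectors `± v j` contains the cube `[-γ, γ]^κ` (when `ι` is finite). -/
def IsL1Norming (γ : ℝ) (v : ι → κ → ℝ) : Prop :=
  ∀ a : κ → ℝ, ∃ j, γ * ∑ i, |a i| ≤ |a ⬝ᵥ v j|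

namespace IsL1Norming

theorem exists_inner_signedFamily_sub_nonpos (h : IsL1Norming γ v) {u : EuclideanSpace ℝ κ}
    (hu : ∀ i, |u i| ≤ γ) (x : EuclideanSpace ℝ κ) : ∃ s, ⟪x, signedFamily v s - u⟫ ≤ 0 := by
  obtain ⟨j, hj⟩ := h x
  have hinner : ⟪x, WithLp.toLp 2 (v j)⟫ = x ⬝ᵥ v j := by
    simp [PiLp.inner_apply, dotProduct, mul_comm]
  have hxu : -⟪x, u⟫ ≤ γ * ∑ i, |x i| := by
    simpa [inner_neg_left] using inner_le_mul_sum_abs hu (-x)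
  rw [← hinner] at hj
  obtain habs | habs := abs_choice ⟪x, WithLp.toLp 2 (v j)⟫
  · refine ⟨.inr j, ?_⟩
    simp only [signedFamily, Sum.elim_inr, inner_sub_right, inner_neg_right]
    linarith
  · refine ⟨.inl j, ?_⟩
    simp only [signedFamily, Sum.elim_inl, inner_sub_right]
    linarith

theorem le_of_abs_le [Nonempty κ] (h : IsL1Norming γ v) (hB : ∀ j i, |v j i| ≤ B) : γ ≤ B := by
  classical
  obtain ⟨i₀⟩ := ‹Nonempty κ›
  obtain ⟨j, hj⟩ := h (Pi.single i₀ 1)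
  simp only [Pi.single_apply, apply_ite abs, abs_one, abs_zero, sum_ite_eq', mem_univ, if_true,
    mul_one, single_dotProduct, one_mul] at hj
  exact hj.trans (hB j i₀)

theorem card_le_card [Fintype ι] (h : IsL1Norming γ v) (hγ : 0 < γ) :
    Fintype.card κ ≤ Fintype.card ι := by
  have hinj : Function.Injective (Matrix.mulVecLin (Matrix.of v)) := by
    rw [injective_iff_map_eq_zero]
    intro a ha
    obtain ⟨j, hj⟩ := h a
    have hzero : a ⬝ᵥ v j = 0 := (dotProduct_comm a (v j)).trans (congrFun ha j)
    rw [hzero, abs_zero] at hj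
    have hsum : ∑ i, |a i| = 0 :=
      (nonpos_of_mul_nonpos_right hj hγ).antisymm (sum_nonneg fun i _ ↦ abs_nonneg _)
    funext i
    exact abs_eq_zero.1 ((sum_eq_zero_iff_of_nonneg fun i _ ↦ abs_nonneg _).1 hsum i (mem_univ i))
  simpa using LinearMap.finrank_le_finrank_of_injective hinj

theorem exp_card_div_eight_le_multichoose [Nonempty κ] [Fintype ι] (h : IsL1Norming γ v)
    (hγ : 0 < γ) (hB : ∀ j i, |v j i| ≤ B) {k : ℕ} (hk : 32 ≤ k * (γ / B) ^ 2) :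
    Real.exp (Fintype.card κ / 8) ≤ (2 * Fintype.card ι).multichoose k := by
  have hγB : γ ≤ B := h.le_of_abs_le hB
  have hB₀ : 0 < B := hγ.trans_le hγB
  have hvertex (e : κ → Bool) (i : κ) : |cubeVertex γ e i| ≤ γ :=
    (abs_cubeVertex γ e i).trans_le (abs_of_pos hγ).le
  set R : ℝ := √(Fintype.card κ * (2 * B) ^ 2)
  have hR (e : κ → Bool) (s : ι ⊕ ι) : ‖signedFamily v s - cubeVertex γ e‖ ≤ R := by
    refine Real.le_sqrt_of_sq_le (norm_sq_le_card_mul_of_abs_le fun i ↦ ?_)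
    have := abs_sub (signedFamily v s i) (cubeVertex γ e i)
    rw [PiLp.sub_apply]
    linarith [abs_signedFamily_le hB s i, hvertex e i]
  obtain ⟨code, hcode⟩ := exists_code_norm_sub_sq_le hR
    (fun e ↦ h.exists_inner_signedFamily_sub_nonpos (hvertex e)) k
  have hsep (e e' : κ → Bool) (hee' : code e = code e') :
      8 * hammingDist e e' ≤ Fintype.card κ := by
    have hclose := hcode e e' hee'
    rw [norm_cubeVertex_sub_sq, Real.sq_sqrt (by positivity)] at hclose
    rw [div_pow, mul_div_assoc', le_div_iff₀ (by positivity)] at hk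
    have : B ^ 2 * (8 * hammingDist e e') ≤ B ^ 2 * Fintype.card κ := by
      nlinarith [mul_le_mul_of_nonneg_right hk (Nat.cast_nonneg (α := ℝ) (hammingDist e e'))]
    exact_mod_cast le_of_mul_le_mul_left this (by positivity)
  classical
  simpa only [Sym.card_sym_eq_multichoose, Fintype.card_sum, ← two_mul] using
    exp_card_div_eight_le_card_of_hammingDist_le code hsep

end IsL1Norming

end Norming

section Estimates

theorem multichoose_le_pow (n : ℕ) {k : ℕ} (hk : k ≠ 0) :
    (n.multichoose k : ℝ) ≤ (Real.exp 1 * (n + k) / k) ^ k := by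
  have hk' : (0 : ℝ) < k := by positivity
  have hpred : ((n + k - 1 : ℕ) : ℝ) ≤ n + k := by exact_mod_cast Nat.sub_le _ _
  have hfact : (k : ℝ) ^ k ≤ Real.exp 1 ^ k * k.factorial := by
    rw [← Real.exp_nat_mul, mul_one, ← div_le_iff₀ (by positivity)]
    exact Real.pow_div_factorial_le_exp k hk'.le k
  calc (n.multichoose k : ℝ) ≤ ((n + k - 1 : ℕ) : ℝ) ^ k / k.factorial := by
        rw [Nat.multichoose_eq]; exact Nat.choose_le_pow_div k _
    _ ≤ (n + k) ^ k / k.factorial := by gcongr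
    _ ≤ Real.exp 1 ^ k * (n + k) ^ k / k ^ k := by
        rw [div_le_div_iff₀ (by positivity) (by positivity)]
        nlinarith [mul_le_mul_of_nonneg_left hfact (by positivity : (0 : ℝ) ≤ (n + k) ^ k)]
    _ = (Real.exp 1 * (n + k) / k) ^ k := by rw [div_pow, mul_pow]

theorem mul_exp_div_le_of_exp_le_multichoose {r : ℝ} {m k : ℕ} (hk : k ≠ 0) (hkm : k ≤ m)
    (h : Real.exp r ≤ (2 * m).multichoose k) : k * Real.exp (r / k) ≤ 3 * Real.exp 1 * m := by
  have hkm' : (k : ℝ) ≤ m := by exact_mod_cast hkm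
  have hpow : Real.exp (r / k) ^ k ≤ (Real.exp 1 * ((2 * m : ℕ) + k) / k) ^ k := by
    rw [← Real.exp_nat_mul, mul_div_cancel₀ _ (by positivity)]
    exact h.trans (multichoose_le_pow _ hk)
  have hroot := le_of_pow_le_pow_left₀ hk (by positivity) hpow
  rw [le_div_iff₀ (by positivity)] at hroot
  push_cast at hroot
  nlinarith [Real.exp_pos 1]

theorem mul_exp_le_exp_ten_mul {z : ℝ} (hz : 1 ≤ z) : 256 * z * Real.exp z ≤ Real.exp (10 * z) := by
  have htwo : (2 : ℝ) ≤ Real.exp z := by linarith [Real.add_one_le_exp z]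
  calc 256 * z * Real.exp z ≤ Real.exp z ^ 8 * Real.exp z * Real.exp z := by
        gcongr
        · calc (256 : ℝ) = 2 ^ 8 := by norm_num
            _ ≤ Real.exp z ^ 8 := by gcongr
        · linarith [Real.add_one_le_exp z]
    _ = Real.exp (10 * z) := by rw [← pow_succ, ← pow_succ, ← Real.exp_nat_mul]; norm_num

-- For `z = x n / 2640 ≥ 1` use `k = ⌈32 / x⌉`: then `k x ≤ 33`, so `n / (8 k) ≥ 10 z`.
theorem div_exp_one_mul_exp_le_of_exp_le_multichoose {n m : ℕ} {x : ℝ} (hnm : n ≤ m)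
    (hx : 0 < x) (hx₁ : x ≤ 1)
    (h : ∀ k : ℕ, 32 ≤ k * x → Real.exp (n / 8) ≤ (2 * m).multichoose k) :
    n / Real.exp 1 * Real.exp (1 / 2640 * x * n) ≤ m := by
  have hnm' : (n : ℝ) ≤ m := by exact_mod_cast hnm
  rw [div_mul_eq_mul_div, div_le_iff₀ (Real.exp_pos 1)]
  set z := 1 / 2640 * x * n with hz
  obtain hz₁ | hz₁ := le_total z 1
  · gcongr
  set k := ⌈32 / x⌉₊
  have hk_lower : 32 ≤ k * x := (div_le_iff₀ hx).1 (Nat.le_ceil _)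
  have hk_upper : k * x ≤ 33 := by
    have hlt : (k : ℝ) < 32 / x + 1 := Nat.ceil_lt_add_one (by positivity)
    rw [← sub_lt_iff_lt_add, lt_div_iff₀ hx] at hlt
    linarith
  have hk : 0 < k := Nat.ceil_pos.2 (by positivity)
  have hkn : (k : ℝ) ≤ n := le_of_mul_le_mul_right (by linarith) hx
  have hz_le : 10 * z ≤ n / 8 / k := by
    rw [le_div_iff₀ (by positivity), hz]
    nlinarith [mul_le_mul_of_nonneg_right hk_upper n.cast_nonneg]
  have hn_le : n ≤ 165 / 2 * z * k := by
    rw [hz]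
    nlinarith [mul_le_mul_of_nonneg_right hk_lower n.cast_nonneg]
  have hcount : k * Real.exp (n / 8 / k) ≤ 3 * Real.exp 1 * m :=
    mul_exp_div_le_of_exp_le_multichoose hk.ne' (by exact_mod_cast hkn.trans hnm') (h k hk_lower)
  have hexp : k * (256 * z * Real.exp z) ≤ 3 * Real.exp 1 * m :=
    calc k * (256 * z * Real.exp z) ≤ k * Real.exp (n / 8 / k) := by
          gcongr
          exact (mul_exp_le_exp_ten_mul hz₁).trans (Real.exp_le_exp.2 hz_le)
      _ ≤ 3 * Real.exp 1 * m := hcount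
  calc n * Real.exp z ≤ 165 / 2 * z * k * Real.exp z := by gcongr
    _ ≤ 256 / 3 * z * k * Real.exp z := by gcongr ?_ * z * k * Real.exp z; norm_num
    _ ≤ m * Real.exp 1 := by linarith

end Estimates

theorem IsL1Norming.card_div_exp_one_mul_exp_le {ι κ : Type*} [Fintype ι] [Fintype κ]
    {v : ι → κ → ℝ} {γ B : ℝ} (h : IsL1Norming γ v) (hγ : 0 < γ) (hB : ∀ j i, |v j i| ≤ B) :
    Fintype.card κ / Real.exp 1 * Real.exp (1 / 2640 * (γ / B) ^ 2 * Fintype.card κ) ≤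
      Fintype.card ι := by
  obtain _ | _ := isEmpty_or_nonempty κ
  · simp
  have hγB : γ ≤ B := h.le_of_abs_le hB
  have hB₀ : 0 < B := hγ.trans_le hγB
  exact div_exp_one_mul_exp_le_of_exp_le_multichoose (h.card_le_card hγ) (by positivity)
    (pow_le_one₀ (by positivity) ((div_le_one hB₀).2 hγB))
    fun k ↦ h.exp_card_div_eight_le_multichoose hγ hB

section Sidon

variable {Ω κ : Type*} [Fintype κ] {φ : κ → Ω → ℝ} {β B D : ℝ}

-- An unbounded `f` has the junk value `supNorm f = 0`.
theorem abs_le_supNorm {f : Ω → ℝ} (hf : supNorm f ≠ 0) (ω : Ω) : |f ω| ≤ supNorm f := by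
  have hbdd : BddAbove (Set.range fun ω ↦ |f ω|) := by
    by_contra hunbdd
    exact hf (Real.iSup_of_not_bddAbove hunbdd)
  exact le_ciSup hbdd ω

theorem le_supNorm_of_sidon
    (hSidon : ∀ a : κ → ℝ, β * ∑ i, |a i| ≤ supNorm fun ω ↦ ∑ i, a i * φ i ω) (i : κ) :
    β ≤ supNorm (φ i) := by
  classical
  simpa [Pi.single_apply, apply_ite abs] using hSidon (Pi.single i 1)

theorem sum_mul_mem_span_range (φ : κ → Ω → ℝ) (a : κ → ℝ) :
    (fun ω ↦ ∑ i, a i * φ i ω) ∈ Submodule.span ℝ (Set.range φ) :=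
  Submodule.mem_span_range_iff_exists_fun ℝ |>.2 ⟨a, by ext ω; simp⟩

theorem isL1Norming_of_sidon {ι : Type*} [Finite ι] {ξ : ι → Ω} [Nonempty κ] (hβ : 0 < β)
    (hD : 0 < D) (hSidon : ∀ a : κ → ℝ, β * ∑ i, |a i| ≤ supNorm fun ω ↦ ∑ i, a i * φ i ω)
    (hξ : ∀ f ∈ Submodule.span ℝ (Set.range φ), supNorm f ≤ D * ⨆ j, |f (ξ j)|) :
    IsL1Norming (β / D) fun j i ↦ φ i (ξ j) := by
  have hnorm (a : κ → ℝ) : β / D * ∑ i, |a i| ≤ ⨆ j, |∑ i, a i * φ i (ξ j)| := by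
    rw [div_mul_eq_mul_div, div_le_iff₀' hD]
    exact (hSidon a).trans (hξ _ (sum_mul_mem_span_range φ a))
  have : Nonempty ι := by
    by_contra! hι
    have hnonpos := hnorm 1
    simp only [Real.iSup_of_isEmpty] at hnonpos
    have : 0 < β / D * ∑ i : κ, |(1 : κ → ℝ) i| := by
      simp only [Pi.one_apply, abs_one, sum_const, card_univ, nsmul_eq_mul, mul_one]
      positivity
    linarith
  intro a
  obtain ⟨j, hj⟩ := exists_eq_ciSup_of_finite (f := fun j ↦ |∑ i, a i * φ i (ξ j)|)
  exact ⟨j, (hnorm a).trans_eq hj.symm⟩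

theorem stmt_19_general {ι : Type*} [Fintype ι] {ξ : ι → Ω} (hβ : 0 < β) (hD : 0 < D)
    (hSidon : ∀ a : κ → ℝ, β * ∑ i, |a i| ≤ supNorm fun ω ↦ ∑ i, a i * φ i ω)
    (hB : ∀ i, supNorm (φ i) ≤ B)
    (hξ : ∀ f ∈ Submodule.span ℝ (Set.range φ), supNorm f ≤ D * ⨆ j, |f (ξ j)|) :
    Fintype.card κ / Real.exp 1 *
        Real.exp (1 / 2640 * β ^ 2 * Fintype.card κ / (B ^ 2 * D ^ 2)) ≤ Fintype.card ι := by
  obtain _ | _ := isEmpty_or_nonempty κ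
  · simp
  have hφ (j : ι) (i : κ) : |φ i (ξ j)| ≤ B :=
    (abs_le_supNorm (hβ.trans_le (le_supNorm_of_sidon hSidon i)).ne' (ξ j)).trans (hB i)
  convert (isL1Norming_of_sidon hβ hD hSidon hξ).card_div_exp_one_mul_exp_le (by positivity) hφ
    using 3
  ring

end Sidon

/-- Corollary 7.1: there is an absolute constant `c > 0` such that if
`φ_1,…,φ_N` is a uniformly bounded Sidon system (`β ∑_i |a_i| ≤ ‖∑_i a_i φ_i‖_∞` and
`‖φ_i‖_∞ ≤ B`) and the LDI `‖f‖_∞ ≤ D max_j |f(ξ^j)|` holds on `X_N = span Φ`, then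
`m ≥ (N/e) e^{cβ²N/(B²D²)}`. -/
theorem stmt_19 :
    ∃ c : ℝ, 0 < c ∧
      ∀ (Ω : Type), Nonempty Ω →
      ∀ (N : ℕ) (φ : Fin N → Ω → ℝ) (β B D : ℝ),
        0 < β → 0 < B → 0 < D →
        (∀ a : Fin N → ℝ, β * ∑ i, |a i| ≤ supNorm (fun ω => ∑ i, a i * φ i ω)) →
        (∀ i, supNorm (φ i) ≤ B) →
        ∀ (m : ℕ) (ξ : Fin m → Ω),
          (∀ f ∈ Submodule.span ℝ (Set.range φ), supNorm f ≤ D * ⨆ j, |f (ξ j)|) →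
          (N : ℝ) / Real.exp 1 * Real.exp (c * β ^ 2 * N / (B ^ 2 * D ^ 2)) ≤ m := by
  refine ⟨1 / 2640, by norm_num, fun Ω _ N φ β B D hβ _ hD hSidon hB m ξ hξ ↦ ?_⟩
  simpa only [Fintype.card_fin] using stmt_19_general hβ hD hSidon hB hξ
end
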